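/- arXiv:1303.3385 — 4 statements merged into one kernel-verified Lean document; each statement's English description precedes it below -/
import Mathlib

section
/- Let q be an odd prime power. The rank over F_2 of the point–hyperplane incidence matrix of PG(n,q) equals q^n + q^{n-1} + ... + q + 1 if n is odd, and q^n + q^{n-1} + ... + q if n is even. -/
open Classical in
/-- Indicator of a proposition in `F₂`. -/
noncomputable def ind (p : Prop) : ZMod 2 := if p then 1 else 0

theorem card_lines {F M : Type*} [Field F] [Fintype F] [AddCommGroup M] [Module F M]
    [FiniteDimensional F M] (S : Submodule F M) :
    Nat.card {L : Submodule F M // Module.finrank F L = 1 ∧ L ≤ S} =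
      ∑ i ∈ Finset.range (Module.finrank F S), Fintype.card F ^ i := by
  have h := Projectivization.card_of_finrank F S (n := Module.finrank F S) rfl
  rw [← Nat.card_eq_fintype_card (α := F), ← h]
  refine (Nat.card_congr ((Projectivization.equivSubmodule F S).trans ?_)).symm
  refine
    { toFun := fun H => ⟨H.1.map S.subtype, ?_, Submodule.map_subtype_le _ _⟩
      invFun := fun L => ⟨L.1.comap S.subtype, ?_⟩
      left_inv := ?_
      right_inv := ?_ }
  · rw [Submodule.finrank_map_subtype_eq]
    exact H.2
  · rw [(Submodule.comapSubtypeEquivOfLe L.2.2).finrank_eq]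
    exact L.2.1
  · intro H
    apply Subtype.ext
    exact Submodule.comap_map_eq_of_injective S.injective_subtype _
  · intro L
    apply Subtype.ext
    simp [Submodule.map_comap_subtype, L.2.2]

theorem card_hyper {F M : Type*} [Field F] [Fintype F] [AddCommGroup M] [Module F M]
    [FiniteDimensional F M] (n : ℕ) (hn : Module.finrank F M = n + 1) (U : Submodule F M) :
    Nat.card {W : {W : Submodule F M // Module.finrank F W = n} // U ≤ W.1} =
      ∑ i ∈ Finset.range (n + 1 - Module.finrank F U), Fintype.card F ^ i := by
  have hU := Subspace.finrank_add_finrank_dualAnnihilator_eq U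
  have e : n + 1 - Module.finrank F U = Module.finrank F U.dualAnnihilator := by omega
  rw [e, ← card_lines]
  refine Nat.card_congr
    { toFun := fun W => ⟨W.1.1.dualAnnihilator, ?_, ?_⟩
      invFun := fun L => ⟨⟨L.1.dualCoannihilator, ?_⟩, ?_⟩
      left_inv := ?_
      right_inv := ?_ }
  · have := Subspace.finrank_add_finrank_dualAnnihilator_eq W.1.1
    have := W.1.2
    omega
  · exact Submodule.dualAnnihilator_anti W.2
  · have := Subspace.finrank_add_finrank_dualCoannihilator_eq L.1
    have := L.2.1
    omega
  · exact (Submodule.le_dualAnnihilator_iff_le_dualCoannihilator).1 L.2.2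
  · intro W
    apply Subtype.ext
    apply Subtype.ext
    exact Subspace.dualAnnihilator_dualCoannihilator_eq
  · intro L
    apply Subtype.ext
    exact Subspace.dualCoannihilator_dualAnnihilator_eq

theorem matrix_rank_add_le {K m n : Type*} [Field K] [Fintype m] [Fintype n]
    (A B : Matrix m n K) : (A + B).rank ≤ A.rank + B.rank := by
  unfold Matrix.rank
  rw [Matrix.mulVecLin_add]
  exact (Submodule.finrank_mono (LinearMap.range_add_le _ _)).trans
    (Submodule.finrank_add_le_finrank_add_finrank _ _)

theorem cast_geom (q k : ℕ) (hq : Odd q) :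
    ((∑ i ∈ Finset.range k, q ^ i : ℕ) : ZMod 2) = k := by
  have : (q : ZMod 2) = 1 := (ZMod.natCast_eq_one_iff_odd).2 hq
  simp [this]

theorem sum_ind {α : Type*} [Fintype α] (p : α → Prop) :
    ∑ a, ind (p a) = ((Nat.card {a // p a} : ℕ) : ZMod 2) := by
  classical
  simp [ind, Finset.sum_boole, Fintype.card_subtype]

theorem ind_mul (a b : Prop) : ind a * ind b = ind (a ∧ b) := by
  unfold ind
  by_cases a <;> by_cases b <;> simp [*]

/-- The 2-rank of the point–hyperplane incidence matrix of `PG(n,q)` is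
`q^n + ⋯ + q + 1` if `n` is odd and `q^n + ⋯ + q` if `n` is even. -/
theorem stmt1 (F : Type) [Field F] [Fintype F] (q n : ℕ)
    (hq : Fintype.card F = q) (hodd : Odd q)
    [Fintype {W : Submodule F (Fin (n + 1) → F) // Module.finrank F ↥W = n}] :
    (Matrix.of fun (P : Projectivization F (Fin (n + 1) → F))
        (W : {W : Submodule F (Fin (n + 1) → F) // Module.finrank F ↥W = n}) =>
        ind (P.submodule ≤ W.1)).rank =
      if Odd n then ∑ i ∈ Finset.range (n + 1), q ^ i
      else ∑ i ∈ Finset.Icc 1 n, q ^ i := by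
  classical
  subst hq
  set A := (Matrix.of fun (P : Projectivization F (Fin (n + 1) → F))
        (W : {W : Submodule F (Fin (n + 1) → F) // Module.finrank F ↥W = n}) =>
        ind (P.submodule ≤ W.1)) with hA
  have : Finite (Projectivization F (Fin (n + 1) → F)) := inferInstance
  let _ : Fintype (Projectivization F (Fin (n + 1) → F)) := Fintype.ofFinite _
  have hv : Fintype.card (Projectivization F (Fin (n + 1) → F)) =
      ∑ i ∈ Finset.range (n + 1), Fintype.card F ^ i := by
    have := Projectivization.card_of_finrank F (Fin (n + 1) → F) (n := n + 1) (by simp)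
    rwa [Nat.card_eq_fintype_card, Nat.card_eq_fintype_card] at this
  have hmul : ∀ P Q, (A * A.transpose) P Q = if P = Q then (n : ZMod 2) else n + 1 := by
    intro P Q
    have h1 : (A * A.transpose) P Q = ((n + 1 - Module.finrank F
        ↥(P.submodule ⊔ Q.submodule) : ℕ) : ZMod 2) := by
      rw [← cast_geom _ _ hodd, ← card_hyper n (by simp), ← sum_ind]
      simp [Matrix.mul_apply, hA, ind_mul]
    rw [h1]
    have hP := P.finrank_submodule
    have hQ := Q.finrank_submodule
    split_ifs with h
    · subst h
      rw [sup_idem, hP]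
      simp
    · have hne : P.submodule ≠ Q.submodule := fun h' => h (Projectivization.submodule_injective h')
      have hinf : Module.finrank F ↥(P.submodule ⊓ Q.submodule) = 0 := by
        by_contra h0
        have e1 := Submodule.eq_of_le_of_finrank_le
          (inf_le_left : P.submodule ⊓ Q.submodule ≤ P.submodule) (by omega)
        have e2 := Submodule.eq_of_le_of_finrank_le
          (inf_le_right : P.submodule ⊓ Q.submodule ≤ Q.submodule) (by omega)
        exact hne (e1.symm.trans e2)
      have hs := Submodule.finrank_sup_add_finrank_inf_eq P.submodule Q.submodule
      have hle := Submodule.finrank_le (P.submodule ⊔ Q.submodule)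
      simp only [Module.finrank_fin_fun] at hle
      have h2 : Module.finrank F ↥(P.submodule ⊔ Q.submodule) = 2 := by omega
      rw [h2] at hle ⊢
      obtain ⟨m, rfl⟩ : ∃ m, n = m + 1 := ⟨n - 1, by omega⟩
      have : (2 : ZMod 2) = 0 := by decide
      have e : m + 1 + 1 - 2 = m := by omega
      rw [e]
      push_cast
      linear_combination (-1 : ZMod 2) * this
  have hle := Matrix.rank_mul_le_left A A.transpose
  have hup := A.rank_le_card_height
  split_ifs with h
  · have hn1 : (n : ZMod 2) = 1 := (ZMod.natCast_eq_one_iff_odd).2 h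
    have : A * A.transpose = 1 := by
      ext P Q
      rw [hmul, Matrix.one_apply, hn1]
      rfl
    rw [this, Matrix.rank_one] at hle
    omega
  · have hn0 : (n : ZMod 2) = 0 := (ZMod.natCast_eq_zero_iff_even).2 (Nat.not_odd_iff_even.1 h)
    have hJ : (1 : Matrix (Projectivization F (Fin (n + 1) → F))
        (Projectivization F (Fin (n + 1) → F)) (ZMod 2)) =
        A * A.transpose + Matrix.vecMulVec (fun _ => 1) (fun _ => 1) := by
      ext P Q
      rw [Matrix.add_apply, hmul, Matrix.one_apply, hn0, Matrix.vecMulVec_apply]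
      split_ifs <;> decide
    have h1 := matrix_rank_add_le (A * A.transpose) (Matrix.vecMulVec (fun _ => 1) (fun _ => 1))
    rw [← hJ, Matrix.rank_one] at h1
    have h2 := Matrix.rank_vecMulVec_le (R := ZMod 2)
      (fun _ : Projectivization F (Fin (n + 1) → F) => 1)
      (fun _ : Projectivization F (Fin (n + 1) → F) => 1)
    have h3 : A.rank < Fintype.card (Projectivization F (Fin (n + 1) → F)) := by
      rw [← Matrix.rank_transpose]
      have hk : (fun _ => 1) ∈ LinearMap.ker A.transpose.mulVecLin := by
        rw [LinearMap.mem_ker]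
        ext W
        simp only [Matrix.mulVecLin_apply, Matrix.mulVec, dotProduct, Matrix.transpose_apply,
          mul_one, Pi.zero_apply, hA, Matrix.of_apply]
        rw [sum_ind]
        have := card_lines W.1
        rw [W.2] at this
        rw [← hn0, ← cast_geom _ n hodd, ← this]
        congr 1
        refine Nat.card_congr ?_
        refine ((Projectivization.equivSubmodule F _).subtypeEquiv
          (q := fun H => H.1 ≤ W.1) ?_).trans (Equiv.subtypeSubtypeEquivSubtypeInter
            (fun H : Submodule F (Fin (n + 1) → F) => Module.finrank F H = 1) (fun H => H ≤ W.1))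
        intro P
        rfl
      have hr := LinearMap.finrank_range_add_finrank_ker A.transpose.mulVecLin
      rw [Module.finrank_pi] at hr
      have hpos : 0 < Module.finrank (ZMod 2) (LinearMap.ker A.transpose.mulVecLin) := by
        rw [Module.finrank_pos_iff]
        refine ⟨⟨_, hk⟩, 0, ?_⟩
        intro h0
        have h0 := congrArg Subtype.val h0
        have h5 := congrFun h0 (Projectivization.mk F (fun _ => 1)
          (fun h => one_ne_zero (congrFun h 0)))
        exact one_ne_zero h5
      unfold Matrix.rank
      omega
    have h4 : ∑ i ∈ Finset.range (n + 1), Fintype.card F ^ i =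
        ∑ i ∈ Finset.Icc 1 n, Fintype.card F ^ i + 1 := by
      rw [Finset.sum_range_succ', pow_zero,
        Finset.range_eq_Ico, Finset.sum_Ico_add' (fun i => Fintype.card F ^ i) 0 n 1]
      rfl
    omega
end

section
/- Let q be an odd prime power. With A_11 as the anisotropic-point versus anisotropic-polar-line incidence matrix of PG(2,q) over F_2, one has A_11^5 = A_11. -/
/-- The quadratic form `Q(x₀,x₁,x₂) = x₁² - x₀x₂` on `F³`. -/
def Qc (F : Type) [Field F] (v : Fin 3 → F) : F := v 1 ^ 2 - v 0 * v 2

/-- The bilinear form associated to `Qc`. -/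
def Bc (F : Type) [Field F] (x y : Fin 3 → F) : F :=
  (2 : F)⁻¹ * (Qc F (x + y) - Qc F x - Qc F y)

/-- A point of `PG(2,q)` is absolute if `Q` vanishes on it. -/
def Absolute (F : Type) [Field F] (P : Projectivization F (Fin 3 → F)) : Prop :=
  Qc F P.rep = 0

/-- A point of `PG(2,q)` is external if `Q` takes a nonzero square value on it. -/
def External (F : Type) [Field F] (P : Projectivization F (Fin 3 → F)) : Prop :=
  IsSquare (Qc F P.rep) ∧ Qc F P.rep ≠ 0

/-- A point of `PG(2,q)` is internal if `Q` takes a non-square value on it. -/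
def Internal (F : Type) [Field F] (P : Projectivization F (Fin 3 → F)) : Prop :=
  ¬ IsSquare (Qc F P.rep)

/-- Lines of `PG(2,q)` are the 2-dimensional subspaces of `F³`. -/
def IsLine (F : Type) [Field F] (L : Submodule F (Fin 3 → F)) : Prop :=
  Module.finrank F ↥L = 2

/-- The number of absolute points on a line. -/
noncomputable def nAbs (F : Type) [Field F] (L : Submodule F (Fin 3 → F)) : ℕ :=
  Nat.card {P : Projectivization F (Fin 3 → F) // Absolute F P ∧ P.submodule ≤ L}

/-- The incidence matrix between anisotropic points and the polar lines of
anisotropic points: the `(P,R)` entry is `1` iff `⟨P,R⟩ = 0`. -/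
noncomputable def A11 (F : Type) [Field F] :
    Matrix {P : Projectivization F (Fin 3 → F) // Qc F P.rep ≠ 0}
      {P : Projectivization F (Fin 3 → F) // Qc F P.rep ≠ 0} (ZMod 2) :=
  Matrix.of fun P R => ind (Bc F P.1.rep R.1.rep = 0)


namespace AnisoAux

variable {F : Type} [Field F]

open Finset

/-- Twice the bilinear form. -/
def bet (x y : Fin 3 → F) : F := 2 * (x 1 * y 1) - x 0 * y 2 - x 2 * y 0

/-- Parallelism of vectors. -/
def Par (x y : Fin 3 → F) : Prop :=
  x 0 * y 1 = x 1 * y 0 ∧ x 0 * y 2 = x 2 * y 0 ∧ x 1 * y 2 = x 2 * y 1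

/-- The polar cross product. -/
def wed (x y : Fin 3 → F) : Fin 3 → F :=
  ![2 * (x 0 * y 1 - x 1 * y 0), x 0 * y 2 - x 2 * y 0, 2 * (x 1 * y 2 - x 2 * y 1)]

/-- Scaled reflection. -/
def refl (c y : Fin 3 → F) : Fin 3 → F := fun i => Qc F c * y i - bet c y * c i

theorem Bc_iff (h2 : (2 : F) ≠ 0) (x y : Fin 3 → F) : Bc F x y = 0 ↔ bet x y = 0 := by
  have : Bc F x y = 2⁻¹ * bet x y := by
    unfold Bc bet Qc
    simp only [Pi.add_apply]
    ring
  rw [this]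
  simp [h2]

theorem mk_eq_iff {x y : Fin 3 → F} (hx : x ≠ 0) (hy : y ≠ 0) :
    Projectivization.mk F x hx = Projectivization.mk F y hy ↔ Par x y := by
  rw [Projectivization.mk_eq_mk_iff_crossProduct_eq_zero, cross_apply]
  unfold Par
  constructor
  · intro h
    have h0 := congrFun h 0
    have h1 := congrFun h 1
    have h2 := congrFun h 2
    simp at h0 h1 h2
    refine ⟨?_, ?_, ?_⟩ <;> grind
  · rintro ⟨h0, h1, h2⟩
    ext i
    fin_cases i <;> simp <;> grind

theorem eq_iff (P R : Projectivization F (Fin 3 → F)) : P = R ↔ Par P.rep R.rep := by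
  rw [← mk_eq_iff P.rep_nonzero R.rep_nonzero, P.mk_rep, R.mk_rep]

theorem rep_mk {x : Fin 3 → F} (hx : x ≠ 0) :
    ∃ a : F, a ≠ 0 ∧ (Projectivization.mk F x hx).rep = a • x := by
  obtain ⟨a, ha⟩ := Projectivization.exists_smul_eq_mk_rep F x hx
  exact ⟨a, a.ne_zero, ha.symm⟩

theorem ind_pos {p : Prop} (h : p) : ind p = 1 := by simp [ind, h]
theorem ind_neg {p : Prop} (h : ¬ p) : ind p = 0 := by simp [ind, h]
theorem ind_and (p r : Prop) : ind (p ∧ r) = ind p * ind r := by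
  by_cases hp : p <;> by_cases hr : r <;> simp [ind, hp, hr]

theorem parity [Fintype (Projectivization F (Fin 3 → F))]
    (s : (Fin 3 → F) → Prop) (f : (Fin 3 → F) → (Fin 3 → F))
    (hs : ∀ (a : F) x, a ≠ 0 → s x → s (a • x))
    (h1 : ∀ x, s x → s (f x)) (h2 : ∀ x, x ≠ 0 → s x → ¬ Par (f x) x)
    (h3 : ∀ (a : F) x, s x → Par (f (a • f x)) x) :
    ∑ X : Projectivization F (Fin 3 → F), ind (s X.rep) = 0 := by
  classical
  have hne : ∀ x, x ≠ 0 → s x → f x ≠ 0 := by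
    intro x hx hsx h
    apply h2 x hx hsx
    simp [h, Par]
  have key : ∑ X ∈ univ.filter (fun X : Projectivization F (Fin 3 → F) => s X.rep), (1 : ZMod 2)
      = 0 := by
    refine Finset.sum_involution
      (fun X hX => Projectivization.mk F (f X.rep)
        (hne _ X.rep_nonzero (by simpa using hX))) ?_ ?_ ?_ ?_
    · intro X hX
      decide
    · intro X hX _ h
      have hX : s X.rep := by simpa using hX
      apply h2 _ X.rep_nonzero hX
      rw [← mk_eq_iff (hne _ X.rep_nonzero hX) X.rep_nonzero, X.mk_rep]
      exact h
    · intro X hX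
      have hX : s X.rep := by simpa using hX
      obtain ⟨a, ha, h⟩ := rep_mk (hne _ X.rep_nonzero hX)
      simp only [mem_filter, mem_univ, true_and]
      rw [h]
      exact hs _ _ ha (h1 _ hX)
    · intro X hX
      have hX : s X.rep := by simpa using hX
      obtain ⟨a, ha, h⟩ := rep_mk (hne _ X.rep_nonzero hX)
      conv_rhs => rw [← X.mk_rep]
      rw [mk_eq_iff, h]
      exact h3 a _ hX
  rw [← key, Finset.sum_filter]
  apply Finset.sum_congr rfl
  intro X _
  by_cases h : s X.rep <;> simp [ind, h]

theorem Qc_smul (a : F) (x : Fin 3 → F) : Qc F (a • x) = a ^ 2 * Qc F x := by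
  simp [Qc]; ring

theorem bet_smul (a : F) (x y : Fin 3 → F) : bet x (a • y) = a * bet x y := by
  simp [bet]; ring

theorem bet_self (x : Fin 3 → F) : bet x x = 2 * Qc F x := by
  simp [bet, Qc]; ring

theorem Qc_wed (x y : Fin 3 → F) : Qc F (wed x y) = bet x y ^ 2 - 4 * Qc F x * Qc F y := by
  simp [bet, Qc, wed]; ring

theorem bet_wed_left (x y : Fin 3 → F) : bet x (wed x y) = 0 := by
  simp [bet, wed]; ring

theorem bet_wed_right (x y : Fin 3 → F) : bet y (wed x y) = 0 := by
  simp [bet, wed]; ring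

theorem Par.bet_sq {x y : Fin 3 → F} (h : Par x y) : bet x y ^ 2 = 4 * Qc F x * Qc F y := by
  obtain ⟨h0, h1, h2⟩ := h
  have := Qc_wed x y
  have hw : wed x y = 0 := by
    ext i; fin_cases i <;> simp [wed] <;> grind
  rw [hw] at this
  simp [Qc] at this
  simp only [Qc]
  linear_combination -this

theorem bet_comm (x y : Fin 3 → F) : bet x y = bet y x := by
  simp [bet]; ring

theorem even_aniso [Fintype (Projectivization F (Fin 3 → F))] (h2 : (2 : F) ≠ 0)
    (p : Fin 3 → F) (hp : Qc F p ≠ 0) :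
    ∑ X : Projectivization F (Fin 3 → F), ind (Qc F X.rep ≠ 0 ∧ bet p X.rep = 0) = 0 := by
  have h4 : (4 : F) ≠ 0 := by
    have : (4 : F) = 2 * 2 := by norm_num
    rw [this]; exact mul_ne_zero h2 h2
  have hQ : ∀ x, Qc F x ≠ 0 → bet p x = 0 → Qc F (wed p x) ≠ 0 := by
    intro x hx hb
    rw [Qc_wed, hb]
    simp [h4, hp, hx]
  refine parity (fun x => Qc F x ≠ 0 ∧ bet p x = 0) (wed p) ?_ ?_ ?_ ?_
  · rintro a x ha ⟨hx, hb⟩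
    simp only [Qc_smul, bet_smul]
    exact ⟨by positivity, by simp [hb]⟩
  · rintro x ⟨hx, hb⟩
    exact ⟨hQ x hx hb, bet_wed_left _ _⟩
  · rintro x - ⟨hx, hb⟩ h
    have := h.bet_sq
    rw [bet_comm, bet_wed_right] at this
    have h5 := mul_ne_zero (mul_ne_zero h4 (hQ x hx hb)) hx
    apply h5
    rw [← this]; simp
  · rintro a x ⟨hx, hb⟩
    simp only [bet] at hb
    refine ⟨?_, ?_, ?_⟩ <;> simp [wed]
    · linear_combination -1 * (a * 2 * (p 0 * x 1 - p 1 * x 0)) * hb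
    · linear_combination -1 * (a * 2 * (p 0 * x 2 - p 2 * x 0)) * hb
    · linear_combination -1 * (a * 2 * (p 1 * x 2 - p 2 * x 1)) * hb

theorem exists_aniso (h2 : (2 : F) ≠ 0) (p : Fin 3 → F) :
    ∃ c : Fin 3 → F, Qc F c ≠ 0 ∧ bet p c = 0 := by
  by_cases hc : p 2 = 0
  · by_cases ha : p 0 = 0
    · exact ⟨![1, 0, 1], by simp [Qc], by simp [bet, ha, hc]⟩
    · exact ⟨![0, p 0, 2 * p 1], by simp [Qc, ha], by simp [bet]; ring⟩
  · exact ⟨![2 * p 1, p 2, 0], by simp [Qc, hc], by simp [bet]; ring⟩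

theorem bet_refl (p c y : Fin 3 → F) :
    bet p (refl c y) = Qc F c * bet p y - bet c y * bet p c := by
  simp [bet, refl]; ring

theorem Qc_refl (c y : Fin 3 → F) : Qc F (refl c y) = Qc F c ^ 2 * Qc F y := by
  simp [bet, refl, Qc]; ring

theorem refl_refl (a : F) (c y : Fin 3 → F) :
    refl c (a • refl c y) = (a * Qc F c ^ 2) • y := by
  ext i
  simp only [refl, Pi.smul_apply, smul_eq_mul]
  simp only [bet_smul]
  rw [bet_refl, bet_self]
  ring

/-- If two vectors are both orthogonal to a nonparallel pair then they are parallel. -/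
theorem par_of_perp (h2 : (2 : F) ≠ 0) {x y z : Fin 3 → F} (hx : bet x z = 0)
    (hy : bet y z = 0) : Par (wed x y) z := by
  simp only [bet] at hx hy
  refine ⟨?_, ?_, ?_⟩ <;> simp [wed]
  · linear_combination x 0 * hy - (y 0) * hx
  · linear_combination 2 * x 1 * hy - 2 * (y 1) * hx
  · linear_combination x 2 * hy - (y 2) * hx

theorem even_abs [Fintype (Projectivization F (Fin 3 → F))] (h2 : (2 : F) ≠ 0)
    (p : Fin 3 → F) (hp : Qc F p ≠ 0) :
    ∑ X : Projectivization F (Fin 3 → F), ind (¬ Qc F X.rep ≠ 0 ∧ bet p X.rep = 0) = 0 := by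
  have h4 : (4 : F) ≠ 0 := by
    have : (4 : F) = 2 * 2 := by norm_num
    rw [this]; exact mul_ne_zero h2 h2
  obtain ⟨c, hc, hpc⟩ := exists_aniso h2 p
  refine parity (fun x => ¬ Qc F x ≠ 0 ∧ bet p x = 0) (refl c) ?_ ?_ ?_ ?_
  · rintro a x ha ⟨hx, hb⟩
    simp only [not_not] at hx
    simp [Qc_smul, bet_smul, hx, hb]
  · rintro x ⟨hx, hb⟩
    simp only [not_not] at hx
    simp [Qc_refl, bet_refl, hx, hb, hpc]
  · rintro x hx0 ⟨hx, hb⟩ h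
    simp only [not_not] at hx
    have hcx : bet c x = 0 := by
      have := h.bet_sq
      rw [hx, bet_comm, bet_refl, bet_self, hx, bet_comm x c] at this
      simp at this
      exact this
    have hw := par_of_perp h2 hb hcx
    have hQ : Qc F (wed p c) ≠ 0 := by
      rw [Qc_wed, hpc]; simp [h4, hp, hc]
    apply hx0
    -- an isotropic multiple of an anisotropic vector is zero
    obtain ⟨k0, k1, k2⟩ := hw
    generalize wed p c = w at *
    simp only [Qc] at hx hQ
    ext i
    have e0 : x 0 ^ 2 * (w 1 ^ 2 - w 0 * w 2) = 0 := by
      linear_combination (w 0)^2 * hx + (-(w 0 * x 1) - x 0 * w 1) * k0 + (w 0 * x 0) * k1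
    have e1 : x 1 ^ 2 * (w 1 ^ 2 - w 0 * w 2) = 0 := by
      linear_combination (w 1)^2 * hx - (w 1 * x 2) * k0 + (w 0 * x 1) * k2
    have e2 : x 2 ^ 2 * (w 1 ^ 2 - w 0 * w 2) = 0 := by
      linear_combination (w 2)^2 * hx + (w 1 * x 2 + w 2 * x 1) * k2 - (w 2 * x 2) * k1
    fin_cases i
    · simpa [hQ] using e0
    · simpa [hQ] using e1
    · simpa [hQ] using e2
  · rintro a x -
    rw [refl_refl]
    refine ⟨?_, ?_, ?_⟩ <;> simp <;> ring

theorem par_trans_wed {w x y : Fin 3 → F} (hw : w ≠ 0) (h : Par w x) (h' : Par w y) :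
    Par x y := by
  obtain ⟨a0, a1, a2⟩ := h
  obtain ⟨b0, b1, b2⟩ := h'
  have : w 0 ≠ 0 ∨ w 1 ≠ 0 ∨ w 2 ≠ 0 := by
    by_contra! hh
    apply hw
    ext i; fin_cases i <;> simp [hh]
  rcases this with hw | hw | hw <;> refine ⟨?_, ?_, ?_⟩ <;> apply mul_left_cancel₀ hw <;> grind

theorem unique_perp [Fintype (Projectivization F (Fin 3 → F))] (h2 : (2 : F) ≠ 0)
    (P R : Projectivization F (Fin 3 → F)) (h : P ≠ R) :
    ∑ X : Projectivization F (Fin 3 → F), ind (bet P.rep X.rep = 0 ∧ bet R.rep X.rep = 0) = 1 := by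
  have hw : wed P.rep R.rep ≠ 0 := by
    intro hw
    apply h
    rw [eq_iff]
    have e0 := congrFun hw 0
    have e1 := congrFun hw 1
    have e2 := congrFun hw 2
    simp [wed, h2] at e0 e1 e2
    exact ⟨sub_eq_zero.1 e0, sub_eq_zero.1 e1, sub_eq_zero.1 e2⟩
  rw [Finset.sum_eq_single (Projectivization.mk F _ hw)]
  · obtain ⟨a, ha, e⟩ := rep_mk hw
    apply ind_pos
    rw [e, bet_smul, bet_smul, bet_wed_left, bet_wed_right]
    simp
  · intro X _ hX
    apply ind_neg
    rintro ⟨e1, e2⟩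
    apply hX
    conv_lhs => rw [← X.mk_rep]
    symm
    rw [mk_eq_iff]
    exact par_of_perp h2 e1 e2
  · simp

/-- Two orthogonal absolute points coincide. -/
theorem abs_perp (h2 : (2 : F) ≠ 0) {x y : Fin 3 → F} (hx : Qc F x = 0) (hy : Qc F y = 0)
    (h : bet x y = 0) : Par x y := by
  simp only [Qc, bet] at *
  have e0 : (x 0 * y 1 - x 1 * y 0) ^ 2 = 0 := by
    linear_combination (y 0)^2 * hx + (x 0)^2 * hy - x 0 * y 0 * h
  have e2 : (x 1 * y 2 - x 2 * y 1) ^ 2 = 0 := by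
    linear_combination (y 2)^2 * hx + (x 2)^2 * hy - x 2 * y 2 * h
  have e1 : (x 0 * y 2 - x 2 * y 0) ^ 2 = 0 := by
    linear_combination (4 * y 1 ^ 2) * hx + 4 * (x 0 * x 2) * hy
      - (2 * (x 1 * y 1) + x 0 * y 2 + x 2 * y 0) * h
  refine ⟨?_, ?_, ?_⟩ <;> apply sub_eq_zero.1
  · simpa using e0
  · simpa using e1
  · simpa using e2

end AnisoAux

open AnisoAux in
/-- Over `F₂`, the fifth power of the anisotropic incidence matrix of `PG(2,q)`
equals the matrix itself. -/
theorem stmt10 (F : Type) [Field F] [Fintype F] (q : ℕ)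
    (hq : Fintype.card F = q) (hodd : Odd q)
    [Fintype {P : Projectivization F (Fin 3 → F) // Qc F P.rep ≠ 0}]
    [DecidableEq {P : Projectivization F (Fin 3 → F) // Qc F P.rep ≠ 0}] :
    A11 F ^ 5 = A11 F := by
  classical
  have h2 : (2 : F) ≠ 0 := by
    apply Ring.two_ne_zero
    intro hc
    have := FiniteField.even_card_of_char_two hc
    rw [hq] at this
    rcases hodd with ⟨k, hk⟩
    omega
  have : Fintype (Projectivization F (Fin 3 → F)) := Fintype.ofFinite _
  let S := {P : Projectivization F (Fin 3 → F) // Qc F P.rep ≠ 0}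
  let T := {P : Projectivization F (Fin 3 → F) // ¬ Qc F P.rep ≠ 0}
  have split : ∀ f : Projectivization F (Fin 3 → F) → ZMod 2,
      (∑ X : S, f X.1) + ∑ X : T, f X.1 = ∑ X, f X := by
    intro f
    convert Fintype.sum_subtype_add_sum_subtype
      (fun P : Projectivization F (Fin 3 → F) => Qc F P.rep ≠ 0) f
  have sumS : ∀ f : Projectivization F (Fin 3 → F) → ZMod 2,
      (∑ X : S, f X.1) = ∑ X, ind (Qc F X.rep ≠ 0) * f X := by
    intro f
    rw [← split]
    rw [Finset.sum_congr rfl (fun (X : S) _ => show ind _ * f X.1 = f X.1 by rw [ind_pos X.2, one_mul]),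
      Finset.sum_congr rfl (fun (X : T) _ => show ind _ * f X.1 = 0 by rw [ind_neg X.2, zero_mul])]
    simp
  have sumT : ∀ f : Projectivization F (Fin 3 → F) → ZMod 2,
      (∑ X : T, f X.1) = ∑ X, ind (¬ Qc F X.rep ≠ 0) * f X := by
    intro f
    rw [← split]
    rw [Finset.sum_congr rfl (fun (X : S) _ => show ind _ * f X.1 = 0 by rw [ind_neg (not_not.2 X.2), zero_mul]),
      Finset.sum_congr rfl (fun (X : T) _ => show ind _ * f X.1 = f X.1 by rw [ind_pos X.2, one_mul])]
    simp
  have hA : A11 F = Matrix.of fun P R : S => ind (bet P.1.rep R.1.rep = 0) := by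
    ext P R
    simp only [A11, Matrix.of_apply, Bc_iff h2]
  rw [hA]
  set A : Matrix S S (ZMod 2) := Matrix.of fun P R : S => ind (bet P.1.rep R.1.rep = 0) with hAd
  let C : Matrix S T (ZMod 2) := Matrix.of fun P R => ind (bet P.1.rep R.1.rep = 0)
  let D : Matrix T S (ZMod 2) := Matrix.of fun P R => ind (bet P.1.rep R.1.rep = 0)
  let J : Matrix S S (ZMod 2) := Matrix.of fun _ _ => 1
  let J' : Matrix T S (ZMod 2) := Matrix.of fun _ _ => 1
  have evS : ∀ P : S, ∑ X : S, ind (bet P.1.rep X.1.rep = 0) = 0 := by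
    intro P
    rw [sumS (fun X => ind (bet P.1.rep X.rep = 0)), ← even_aniso h2 _ P.2]
    simp only [ind_and]
  have evT : ∀ P : S, ∑ X : T, ind (bet P.1.rep X.1.rep = 0) = 0 := by
    intro P
    rw [sumT (fun X => ind (bet P.1.rep X.rep = 0)), ← even_abs h2 _ P.2]
    simp only [ind_and]
  have E3 : J * A = 0 := by
    ext P R
    simp only [Matrix.mul_apply, J, A, Matrix.of_apply, one_mul, Matrix.zero_apply]
    rw [← evS R]
    simp only [bet_comm]
  have E4 : C * J' = 0 := by
    ext P R
    simp only [Matrix.mul_apply, J', C, Matrix.of_apply, mul_one, Matrix.zero_apply]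
    exact evT P
  have sq : ∀ p r : Projectivization F (Fin 3 → F), 
      (∑ X : S, ind (bet p.rep X.1.rep = 0) * ind (bet X.1.rep r.rep = 0)) +
      (∑ X : T, ind (bet p.rep X.1.rep = 0) * ind (bet X.1.rep r.rep = 0)) =
      ∑ X : Projectivization F (Fin 3 → F),
        ind (bet p.rep X.rep = 0 ∧ bet r.rep X.rep = 0) := by
    intro p r
    rw [split (fun X => ind (bet p.rep X.rep = 0) * ind (bet X.rep r.rep = 0))]
    apply Finset.sum_congr rfl
    intro X _
    rw [ind_and, bet_comm X.rep]
  have E1 : A * A + C * D = 1 + J := by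
    ext P R
    simp only [Matrix.add_apply, Matrix.mul_apply, A, C, D, J, Matrix.of_apply]
    rw [sq]
    by_cases h : P = R
    · subst h
      simp only [and_self, Matrix.one_apply_eq]
      rw [← split, evS, evT]
      decide
    · rw [unique_perp h2 _ _ (fun e => h (Subtype.ext e)), Matrix.one_apply_ne h, zero_add]
  have E2 : D * A + D = J' := by
    ext P R
    have hPR : P.1 ≠ R.1 := fun e => P.2 (e ▸ R.2)
    simp only [Matrix.add_apply, Matrix.mul_apply, A, D, J', Matrix.of_apply]
    rw [← unique_perp h2 _ _ hPR, ← sq]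
    congr 1
    rw [Finset.sum_eq_single P]
    · rw [ind_pos (p := bet P.1.rep P.1.rep = 0), one_mul]
      rw [bet_self, not_not.1 P.2, mul_zero]
    · intro X _ hX
      rw [ind_neg, zero_mul]
      intro hb
      apply hX
      symm
      apply Subtype.ext
      rw [eq_iff]
      exact abs_perp h2 (not_not.1 P.2) (not_not.1 X.2) hb
    · simp
  have two : ∀ M : Matrix S S (ZMod 2), M + M = 0 := by
    intro M
    ext i j
    exact CharTwo.add_self_eq_zero _
  have hBA : C * D * A = C * D := by
    have h : C * (D * A + D) = 0 := by rw [E2, E4]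
    rw [Matrix.mul_add, ← Matrix.mul_assoc] at h
    have := two (C * D)
    calc C * D * A = (C * D * A + C * D) - C * D := by abel
      _ = (C * D + C * D) - C * D := by rw [h, this]
      _ = C * D := by abel
  have hA2 : A * A = 1 + J + C * D := by
    have := two (C * D)
    calc A * A = (A * A + C * D) + C * D - (C * D + C * D) := by abel
      _ = _ := by rw [E1, this]; abel
  have hA3 : A * A * A = A + C * D := by
    rw [hA2, Matrix.add_mul, Matrix.add_mul, E3, hBA, Matrix.one_mul, add_zero]
  calc A ^ 5 = A * A * A * A * A := by simp only [pow_succ, pow_zero, Matrix.one_mul]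
    _ = A * A * A + C * D := by rw [hA3, Matrix.add_mul, Matrix.add_mul, hBA, hBA, hA3]
    _ = A := by rw [hA3, add_assoc, two, add_zero]
end

section
/- Let q be an odd prime power. In PG(2,q) with the conic O = {x_1^2 = x_0 x_2}, for any external point P, the complement of N_E(P) in E has cardinality 2(q−1)+1 = 2q−1; hence |N_E(P)| ≡ q(q+1)/2 − 1 (mod 2). -/
/-- `NE F P` is the set of external points, other than `P`, lying on some secant
(meeting the conic twice) or passant (missing the conic) line through `P`. -/
def NE (F : Type) [Field F] (P : Projectivization F (Fin 3 → F)) :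
    Set (Projectivization F (Fin 3 → F)) :=
  {R | External F R ∧ R ≠ P ∧
    ∃ L : Submodule F (Fin 3 → F), IsLine F L ∧ P.submodule ≤ L ∧ R.submodule ≤ L ∧
      (nAbs F L = 0 ∨ nAbs F L = 2)}

section helpers
variable {F : Type} [Field F]

lemma sq_eq_one_iff_of_dom {x : F} : x ^ 2 = 1 ↔ x = 1 ∨ x = -1 := by
  rw [← one_pow 2, sq_eq_sq_iff_eq_or_eq_neg]; simp

lemma bc_formula (h2 : (2 : F) ≠ 0) (x y : Fin 3 → F) :
    2 * Bc F x y = 2 * x 1 * y 1 - x 0 * y 2 - x 2 * y 0 := by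
  unfold Bc Qc
  rw [mul_inv_cancel_left₀ h2]
  simp only [Pi.add_apply]
  ring

lemma qc_smul (a : F) (v : Fin 3 → F) : Qc F (a • v) = a ^ 2 * Qc F v := by
  simp only [Qc, Pi.smul_apply, smul_eq_mul]; ring

lemma qc_lin (h2 : (2 : F) ≠ 0) (a b : F) (p r : Fin 3 → F) :
    Qc F (a • p + b • r) = a ^ 2 * Qc F p + a * b * (2 * Bc F p r) + b ^ 2 * Qc F r := by
  rw [bc_formula h2]
  simp only [Qc, Pi.add_apply, Pi.smul_apply, smul_eq_mul]; ring

lemma bc_lin (h2 : (2 : F) ≠ 0) (a b : F) (p r s : Fin 3 → F) :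
    Bc F p (a • r + b • s) = a * Bc F p r + b * Bc F p s := by
  apply mul_left_cancel₀ h2
  have e1 := bc_formula h2 p (a • r + b • s)
  have e2 := bc_formula h2 p r
  have e3 := bc_formula h2 p s
  simp only [Pi.add_apply, Pi.smul_apply, smul_eq_mul] at e1
  linear_combination e1 - a * e2 - b * e3

lemma bc_smul (h2 : (2 : F) ≠ 0) (a : F) (p r : Fin 3 → F) :
    Bc F p (a • r) = a * Bc F p r := by
  have := bc_lin h2 a 0 p r r
  simpa using this

lemma bc_self (h2 : (2 : F) ≠ 0) (p : Fin 3 → F) : Bc F p p = Qc F p := by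
  apply mul_left_cancel₀ h2
  rw [bc_formula h2]; unfold Qc; ring

lemma qc_zero : Qc F 0 = 0 := by simp [Qc]

lemma ne_zero_of_qc {v : Fin 3 → F} (h : Qc F v ≠ 0) : v ≠ 0 := by
  rintro rfl; exact h qc_zero

lemma rep_mk (v : Fin 3 → F) (hv : v ≠ 0) :
    ∃ a : F, a ≠ 0 ∧ (Projectivization.mk F v hv).rep = a • v := by
  obtain ⟨a, ha⟩ := Projectivization.exists_smul_eq_mk_rep F v hv
  exact ⟨a, a.ne_zero, ha.symm⟩

lemma mk_eq_of (v w : Fin 3 → F) (hv : v ≠ 0) (hw : w ≠ 0) (a : F) (h : a • w = v) :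
    Projectivization.mk F v hv = Projectivization.mk F w hw := by
  rw [Projectivization.mk_eq_mk_iff']; exact ⟨a, h⟩

/-- Absolute points on the span of `p, r` correspond to square roots of the discriminant. -/
lemma nAbs_span (h2 : (2 : F) ≠ 0) (p r : Fin 3 → F) (hp : Qc F p ≠ 0)
    (hli : ∀ s t : F, s • p + t • r = 0 → s = 0 ∧ t = 0) :
    nAbs F (Submodule.span F {p, r}) =
      Nat.card {y : F // y ^ 2 = Bc F p r ^ 2 - Qc F p * Qc F r} := by
  symm
  unfold nAbs
  have hne : ∀ x : F, x • p + r ≠ 0 := by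
    intro x hx
    have := (hli x 1 (by simpa using hx)).2
    exact one_ne_zero this
  have hQ : ∀ x : F, Qc F (x • p + r) = x ^ 2 * Qc F p + x * (2 * Bc F p r) + Qc F r := by
    intro x
    have := qc_lin h2 x 1 p r
    simpa using this
  refine Nat.card_eq_of_bijective
    (fun y => ⟨Projectivization.mk F (((y.1 - Bc F p r) / Qc F p) • p + r) (hne _), ?_, ?_⟩) ⟨?_, ?_⟩
  · obtain ⟨a, ha, h⟩ := rep_mk _ (hne ((y.1 - Bc F p r) / Qc F p))
    unfold Absolute
    rw [h, qc_smul, hQ]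
    have hy := y.2
    field_simp
    linear_combination a ^ 2 * hy
  · rw [Projectivization.submodule_mk, Submodule.span_singleton_le_iff_mem,
      Submodule.mem_span_pair]
    exact ⟨(y.1 - Bc F p r) / Qc F p, 1, by simp⟩
  · intro y z h
    have h1 := congrArg Subtype.val h
    simp only at h1
    rw [Projectivization.mk_eq_mk_iff'] at h1
    obtain ⟨a, ha⟩ := h1
    have h3 := hli (a * ((z.1 - Bc F p r) / Qc F p) - (y.1 - Bc F p r) / Qc F p) (a - 1) (by
      have h4 := sub_eq_zero.mpr ha
      rw [← h4]; module)
    have ha1 : a = 1 := sub_eq_zero.mp h3.2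
    have h5 := h3.1
    rw [ha1] at h5
    field_simp at h5
    apply Subtype.ext
    linear_combination -h5
  · rintro ⟨S, hS, hL⟩
    rw [Projectivization.submodule_eq, Submodule.span_singleton_le_iff_mem,
      Submodule.mem_span_pair] at hL
    obtain ⟨a, b, hab⟩ := hL
    unfold Absolute at hS
    have hb : b ≠ 0 := by
      rintro rfl
      have h0 : a • p = S.rep := by simpa using hab
      rw [← h0, qc_smul] at hS
      rcases mul_eq_zero.mp hS with h | h
      · have : a = 0 := by simpa using h
        rw [this, zero_smul] at h0
        exact S.rep_nonzero h0.symm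
      · exact hp h
    rw [← hab, qc_lin h2] at hS
    refine ⟨⟨Qc F p * (a / b) + Bc F p r, ?_⟩, ?_⟩
    · field_simp
      linear_combination Qc F p * hS
    · apply Subtype.ext
      simp only
      conv_rhs => rw [← Projectivization.mk_rep S]
      apply mk_eq_of _ _ _ _ b⁻¹
      rw [← hab]
      have : (Qc F p * (a / b) + Bc F p r - Bc F p r) / Qc F p = b⁻¹ * a := by
        field_simp; ring
      rw [this, smul_add, smul_smul, smul_smul, inv_mul_cancel₀ hb, one_smul]

lemma card_sqrt_zero : Nat.card {y : F // y ^ 2 = 0} = 1 := by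
  rw [Nat.card_eq_one_iff_unique]
  refine ⟨⟨fun a b => Subtype.ext ?_⟩, ⟨0, by simp⟩⟩
  have h1 := a.2
  have h2 := b.2
  simp at h1 h2
  rw [h1, h2]

lemma card_sqrt (h2 : (2 : F) ≠ 0) (d : F) (hd : d ≠ 0) :
    Nat.card {y : F // y ^ 2 = d} = 0 ∨ Nat.card {y : F // y ^ 2 = d} = 2 := by
  by_cases h : ∃ s : F, s ^ 2 = d
  · right
    obtain ⟨s, rfl⟩ := h
    have hs : s ≠ -s := by
      intro h
      have : 2 * s = 0 := by linear_combination h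
      rcases mul_eq_zero.mp this with h | h
      · exact h2 h
      · exact hd (by rw [h]; simp)
    have : {y : F | y ^ 2 = s ^ 2} = {s, -s} := by
      ext y; simp [sq_eq_sq_iff_eq_or_eq_neg]
    change Nat.card ({y : F | y ^ 2 = s ^ 2} : Set F) = 2
    rw [this, Nat.card_coe_set_eq, Set.ncard_pair hs]
  · left
    push Not at h
    have : IsEmpty {y : F // y ^ 2 = d} := ⟨fun y => h y.1 y.2⟩
    exact Nat.card_of_isEmpty

lemma rep_indep {P R : Projectivization F (Fin 3 → F)} (h : R ≠ P) (s t : F)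
    (hst : s • P.rep + t • R.rep = 0) : s = 0 ∧ t = 0 := by
  have := (Projectivization.independent_pair_iff_ne P R).mpr h.symm
  rw [Projectivization.independent_iff] at this
  have h3 : (Projectivization.rep ∘ ![P, R]) = ![P.rep, R.rep] := by
    ext i; fin_cases i <;> rfl
  rw [h3, LinearIndependent.pair_iff] at this
  exact this s t hst

lemma mem_NE_iff (h2 : (2 : F) ≠ 0) (P R : Projectivization F (Fin 3 → F)) (hP : Qc F P.rep ≠ 0) :
    R ∈ NE F P ↔ External F R ∧ Bc F P.rep R.rep ^ 2 - Qc F P.rep * Qc F R.rep ≠ 0 := by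
  unfold NE
  simp only [Set.mem_setOf_eq]
  refine and_congr_right fun _ => ?_
  by_cases hRP : R = P
  · subst hRP
    simp [bc_self h2, sq]
  have hli := rep_indep hRP
  have hfr : Module.finrank F (Submodule.span F {P.rep, R.rep}) = 2 := by
    have h4 : LinearIndependent F ![P.rep, R.rep] := LinearIndependent.pair_iff.mpr hli
    have := finrank_span_eq_card h4
    rw [Matrix.range_cons_cons_empty] at this
    simpa using this
  have hn := nAbs_span h2 _ _ hP hli
  constructor
  · rintro ⟨_, L, hL, hPL, hRL, hN⟩ h0
    have hle : Submodule.span F {P.rep, R.rep} ≤ L := by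
      rw [Projectivization.submodule_eq, Submodule.span_singleton_le_iff_mem] at hPL hRL
      rw [Submodule.span_le]
      rintro x (rfl | rfl)
      · exact hPL
      · exact hRL
    have hE := Submodule.eq_of_le_of_finrank_eq hle (hfr.trans hL.symm)
    rw [← hE, hn, h0, card_sqrt_zero] at hN
    omega
  · intro h
    refine ⟨hRP, _, hfr, ?_, ?_, hn ▸ card_sqrt h2 _ h⟩
    · rw [Projectivization.submodule_eq, Submodule.span_singleton_le_iff_mem]
      exact Submodule.subset_span (by simp)
    · rw [Projectivization.submodule_eq, Submodule.span_singleton_le_iff_mem]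
      exact Submodule.subset_span (by simp)

lemma compl_eq (h2 : (2 : F) ≠ 0) (P : Projectivization F (Fin 3 → F)) (hP : External F P) :
    {R : Projectivization F (Fin 3 → F) | External F R ∧ R ∉ NE F P} =
    {R | Bc F P.rep R.rep ^ 2 = Qc F P.rep * Qc F R.rep ∧ Qc F R.rep ≠ 0} := by
  ext R
  simp only [Set.mem_setOf_eq, mem_NE_iff h2 P R hP.2]
  constructor
  · rintro ⟨h, h'⟩
    refine ⟨?_, h.2⟩
    by_contra hne
    exact h' ⟨h, sub_ne_zero.mpr hne⟩
  · rintro ⟨h, h'⟩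
    refine ⟨⟨?_, h'⟩, fun hh => hh.2 (sub_eq_zero.mpr h)⟩
    obtain ⟨s, hs⟩ := hP.1
    have hs0 : s ≠ 0 := by
      rintro rfl
      exact hP.2 (by simpa using hs)
    refine ⟨Bc F P.rep R.rep / s, ?_⟩
    field_simp
    rw [h, hs]; ring

lemma ncard_compl (h2 : (2 : F) ≠ 0) (P : Projectivization F (Fin 3 → F))
    (hP : Qc F P.rep ≠ 0) :
    {R : Projectivization F (Fin 3 → F) |
      Bc F P.rep R.rep ^ 2 = Qc F P.rep * Qc F R.rep ∧ Qc F R.rep ≠ 0}.ncard =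
    {u : Fin 3 → F | Bc F P.rep u = 0 ∧ Qc F u = 0}.ncard := by
  symm
  generalize P.rep = p at hP ⊢
  have hQ : ∀ u : Fin 3 → F, Bc F p u = 0 ∧ Qc F u = 0 → Qc F (p + u) = Qc F p := by
    rintro u ⟨h1, h3⟩
    have := qc_lin h2 1 1 p u
    simpa [h1, h3] using this
  have hB : ∀ u : Fin 3 → F, Bc F p u = 0 ∧ Qc F u = 0 → Bc F p (p + u) = Qc F p := by
    rintro u ⟨h1, h3⟩
    have := bc_lin h2 1 1 p p u
    simpa [h1, bc_self h2] using this
  have hne : ∀ u : Fin 3 → F, Bc F p u = 0 ∧ Qc F u = 0 → p + u ≠ 0 := fun u hu =>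
    ne_zero_of_qc (by rw [hQ u hu]; exact hP)
  refine Set.ncard_congr (fun u hu => Projectivization.mk F (p + u) (hne u hu)) ?_ ?_ ?_
  · intro u hu
    obtain ⟨a, ha, h⟩ := rep_mk _ (hne u hu)
    simp only [Set.mem_setOf_eq]
    rw [h, bc_smul h2, qc_smul, hQ u hu, hB u hu]
    refine ⟨by ring, by simp [ha, hP]⟩
  · intro u v hu hv h
    rw [Projectivization.mk_eq_mk_iff'] at h
    obtain ⟨a, ha⟩ := h
    have h1 := congrArg (Bc F p) ha
    rw [bc_smul h2, hB u hu, hB v hv] at h1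
    have ha1 : a = 1 := by
      apply mul_right_cancel₀ hP; rw [h1, one_mul]
    rw [ha1, one_smul] at ha
    exact (add_left_cancel ha).symm
  · rintro R ⟨h1, h3⟩
    have hb : Bc F p R.rep ≠ 0 := by
      intro h0
      rw [h0] at h1
      exact mul_ne_zero hP h3 (by rw [← h1]; simp)
    have e1 := bc_lin h2 (Qc F p / Bc F p R.rep) (-1) p R.rep p
    have e2 := qc_lin h2 (-1) (Qc F p / Bc F p R.rep) p R.rep
    refine ⟨(Qc F p / Bc F p R.rep) • R.rep + (-1 : F) • p, ⟨?_, ?_⟩, ?_⟩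
    · rw [e1, bc_self h2]; field_simp; ring
    · rw [add_comm, e2]; field_simp
      linear_combination -Qc F p * h1
    · conv_rhs => rw [← Projectivization.mk_rep R]
      apply mk_eq_of _ _ _ _ (Qc F p / Bc F p R.rep)
      module

lemma ncard_axes [Fintype F] : {z : F × F | z.1 * z.2 = 0}.ncard = 2 * Fintype.card F - 1 := by
  have h : {z : F × F | z.1 * z.2 = 0} =
      Set.range (fun x : F => (x, (0 : F))) ∪ (fun x : F => ((0 : F), x)) '' {0}ᶜ := by
    ext ⟨x, y⟩
    simp only [Set.mem_setOf_eq, mul_eq_zero, Set.mem_union, Set.mem_range, Prod.mk.injEq,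
      Set.mem_image, Set.mem_compl_iff, Set.mem_singleton_iff]
    constructor
    · rintro (rfl | rfl)
      · by_cases hy : y = 0
        · left; exact ⟨0, rfl, hy.symm⟩
        · right; exact ⟨y, hy, rfl, rfl⟩
      · left; exact ⟨x, rfl, rfl⟩
    · rintro (⟨_, _, h⟩ | ⟨_, _, h, _⟩)
      · exact Or.inr h.symm
      · exact Or.inl h.symm
  rw [h, Set.ncard_union_eq, Set.ncard_image_of_injective, Set.ncard_compl, ← Set.image_univ,
    Set.ncard_image_of_injective]
  · simp only [Set.ncard_univ, Nat.card_eq_fintype_card, Set.ncard_singleton]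
    have := Fintype.card_pos (α := F)
    omega
  · intro x y h; simpa using h
  · intro x y h; simpa using h
  · rw [Set.disjoint_left]
    rintro _ ⟨x, rfl⟩ ⟨y, hy, h⟩
    simp at h
    exact hy h.2

lemma ncard_isotropic [Fintype F] (h2 : (2 : F) ≠ 0) (p : Fin 3 → F) (s : F)
    (hs : Qc F p = s * s) (hs0 : s ≠ 0) :
    {u : Fin 3 → F | Bc F p u = 0 ∧ Qc F u = 0}.ncard = 2 * Fintype.card F - 1 := by
  rw [← ncard_axes]
  have hB : ∀ u, Bc F p u = 0 ↔ 2 * p 1 * u 1 - p 0 * u 2 - p 2 * u 0 = 0 := by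
    intro u
    rw [← bc_formula h2]; simp [h2]
  simp only [hB]
  unfold Qc at *
  generalize p 0 = a at *
  generalize p 1 = b at *
  generalize p 2 = c at *
  by_cases hc : c = 0
  · subst hc
    have hb : b ≠ 0 := by
      rintro rfl
      apply hs0
      have : s * s = 0 := by rw [← hs]; ring
      simpa using this
    refine Set.ncard_congr (fun u _ => (u 2, u 0 - a ^ 2 * u 2 / (4 * b ^ 2))) ?_ ?_ ?_
    all_goals have h4 : (4 : F) ≠ 0 := by
                have : (4 : F) = 2 * 2 := by norm_num
                rw [this]; exact mul_ne_zero h2 h2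
    · rintro u ⟨h1, h3⟩
      have e : u 1 = a * u 2 / (2 * b) := by
        field_simp; linear_combination h1
      rw [e] at h3
      simp only [Set.mem_setOf_eq]
      rw [div_pow] at h3
      have e4 : (2 * b) ^ 2 = 4 * b ^ 2 := by ring
      rw [e4] at h3
      linear_combination -h3
    · rintro u v ⟨h1, h3⟩ ⟨h1', h3'⟩ h
      simp only [Prod.mk.injEq] at h
      obtain ⟨ha, hb'⟩ := h
      rw [ha] at hb'
      have e0 : u 0 = v 0 := sub_left_injective hb'
      have e1 : u 1 = v 1 := by
        apply mul_left_cancel₀ (mul_ne_zero h2 hb)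
        linear_combination h1 - h1' + a * ha
      ext i; fin_cases i
      · exact e0
      · exact e1
      · exact ha
    · rintro ⟨x, y⟩ h
      simp only [Set.mem_setOf_eq] at h
      refine ⟨![y + a ^ 2 * x / (4 * b ^ 2), a * x / (2 * b), x], ⟨?_, ?_⟩, ?_⟩
      · simp; field_simp; ring
      · simp
        have e4 : (2 * b) ^ 2 = 4 * b ^ 2 := by ring
        rw [div_pow, e4]
        linear_combination -h
      · simp
  · refine Set.ncard_congr
      (fun u _ => (c * u 1 - (b + s) * u 2, c * u 1 - (b - s) * u 2)) ?_ ?_ ?_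
    · rintro u ⟨h1, h3⟩
      simp only [Set.mem_setOf_eq]
      linear_combination c ^ 2 * h3 + u 2 ^ 2 * hs - c * u 2 * h1
    · rintro u v ⟨h1, h3⟩ ⟨h1', h3'⟩ h
      simp only [Prod.mk.injEq] at h
      obtain ⟨ha, hb'⟩ := h
      have e2 : u 2 = v 2 := by
        apply mul_left_cancel₀ (mul_ne_zero h2 hs0)
        linear_combination hb' - ha
      have e1 : u 1 = v 1 := by
        apply mul_left_cancel₀ hc
        linear_combination ha + (b + s) * e2
      have e0 : u 0 = v 0 := by
        apply mul_left_cancel₀ hc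
        linear_combination h1' - h1 + 2 * b * e1 - a * e2
      ext i; fin_cases i
      · exact e0
      · exact e1
      · exact e2
    · rintro ⟨x, y⟩ h
      simp only [Set.mem_setOf_eq] at h
      obtain ⟨w, hw⟩ : ∃ w, w = (y - x) / (2 * s) := ⟨_, rfl⟩
      obtain ⟨v, hv⟩ : ∃ v, v = (x + (b + s) * w) / c := ⟨_, rfl⟩
      obtain ⟨u, hu⟩ : ∃ u, u = (2 * b * v - a * w) / c := ⟨_, rfl⟩
      have hw' : 2 * s * w = y - x := by rw [hw]; field_simp
      have hv' : c * v = x + (b + s) * w := by rw [hv]; field_simp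
      have hu' : c * u = 2 * b * v - a * w := by rw [hu]; field_simp
      have ex : x = c * v - (b + s) * w := by linear_combination -hv'
      have ey : y = c * v - (b - s) * w := by linear_combination -hv' - hw'
      refine ⟨![u, v, w], ⟨?_, ?_⟩, ?_⟩
      · simp; linear_combination -hu'
      · simp
        apply mul_left_cancel₀ (pow_ne_zero 2 hc)
        rw [ex, ey] at h
        linear_combination h - w ^ 2 * hs - c * w * hu'
      · simp [ex, ey]

lemma ncard_unit [Fintype F] (h2 : (2 : F) ≠ 0) :
    {v : Fin 3 → F | Qc F v = 1}.ncard = Fintype.card F * (Fintype.card F + 1) := by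
  have h : {v : Fin 3 → F | Qc F v = 1} =
      (fun z : F × F => ![z.1, z.2, (z.2 ^ 2 - 1) / z.1]) '' ({0}ᶜ ×ˢ Set.univ) ∪
      (fun z : F × F => ![0, z.1, z.2]) '' ({1, -1} ×ˢ Set.univ) := by
    ext v
    simp only [Set.mem_setOf_eq, Set.mem_union, Set.mem_image, Set.mem_prod, Set.mem_compl_iff,
      Set.mem_singleton_iff, Set.mem_univ, and_true, Set.mem_insert_iff, Prod.exists, Qc]
    constructor
    · intro hv
      by_cases h0 : v 0 = 0
      · right
        refine ⟨v 1, v 2, ?_, ?_⟩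
        · rw [h0] at hv
          exact sq_eq_one_iff_of_dom.mp (by linear_combination hv)
        · ext i; fin_cases i <;> simp [h0]
      · left
        refine ⟨v 0, v 1, h0, ?_⟩
        have : (v 1 ^ 2 - 1) / v 0 = v 2 := by
          field_simp; linear_combination hv
        ext i; fin_cases i <;> simp [this]
    · rintro (⟨x, y, hx, rfl⟩ | ⟨x, y, hx, rfl⟩)
      · simp; field_simp; ring
      · rcases hx with rfl | rfl <;> simp
  have h11 : (1 : F) ≠ -1 := by
    intro h; apply h2; linear_combination h
  rw [h, Set.ncard_union_eq, Set.ncard_image_of_injective, Set.ncard_image_of_injective,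
    Set.ncard_prod, Set.ncard_prod, Set.ncard_compl, Set.ncard_pair h11]
  · simp only [Set.ncard_univ, Nat.card_eq_fintype_card, Set.ncard_singleton]
    obtain ⟨n, hn⟩ := Nat.exists_eq_succ_of_ne_zero (Fintype.card_ne_zero (α := F))
    rw [hn]; simp; ring
  · rintro ⟨x, y⟩ ⟨x', y'⟩ h
    have e1 := congrFun h 1
    have e2 := congrFun h 2
    simp at e1 e2
    simp [e1, e2]
  · rintro ⟨x, y⟩ ⟨x', y'⟩ h
    have e1 := congrFun h 0
    have e2 := congrFun h 1
    simp at e1 e2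
    simp [e1, e2]
  · rw [Set.disjoint_left]
    rintro _ ⟨⟨x, y⟩, hx, rfl⟩ ⟨⟨x', y'⟩, hx', h⟩
    have e1 := congrFun h 0
    simp at e1 hx
    exact hx e1.symm

lemma ncard_external [Fintype F] (h2 : (2 : F) ≠ 0) :
    2 * {R : Projectivization F (Fin 3 → F) | External F R}.ncard =
      Fintype.card F * (Fintype.card F + 1) := by
  rw [← ncard_unit h2]
  have hex : ∀ R : {R : Projectivization F (Fin 3 → F) // External F R},
      ∃ a : F, a ≠ 0 ∧ Qc F (a • R.1.rep) = 1 := by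
    rintro ⟨R, ⟨s, hs⟩, h0⟩
    have hs0 : s ≠ 0 := by
      rintro rfl
      exact h0 (by simpa using hs)
    refine ⟨s⁻¹, inv_ne_zero hs0, ?_⟩
    rw [qc_smul, hs]; field_simp
  choose a ha0 ha using hex
  have hcard : Nat.card ({R : Projectivization F (Fin 3 → F) // External F R} × ({1, -1} : Set F)) =
      Nat.card {v : Fin 3 → F // Qc F v = 1} := by
    refine Nat.card_eq_of_bijective (fun z => ⟨z.2.1 • (a z.1 • z.1.1.rep), ?_⟩) ⟨?_, ?_⟩
    · rw [qc_smul, ha]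
      rcases z.2.2 with h | h
      · rw [h]; simp
      · rw [Set.mem_singleton_iff.mp h]; simp
    · rintro ⟨R, e, he⟩ ⟨S, f, hf⟩ h
      have h1 := congrArg Subtype.val h
      simp only at h1
      have he0 : e ≠ 0 := by
        rcases he with h' | h'
        · rw [h']; simp
        · rw [Set.mem_singleton_iff.mp h']; simp
      have hRS : R = S := by
        apply Subtype.ext
        rw [← Projectivization.mk_rep R.1, ← Projectivization.mk_rep S.1]
        apply mk_eq_of _ _ _ _ ((e * a R)⁻¹ * (f * a S))
        rw [mul_smul, mul_smul f, ← h1, smul_smul e, smul_smul, inv_mul_cancel₀, one_smul]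
        exact mul_ne_zero he0 (ha0 R)
      subst hRS
      have hv : a R • R.1.rep ≠ 0 := smul_ne_zero (ha0 R) R.1.rep_nonzero
      have := smul_left_injective F hv h1
      subst this
      rfl
    · rintro ⟨v, hv⟩
      have hv0 : v ≠ 0 := ne_zero_of_qc (by rw [hv]; exact one_ne_zero)
      obtain ⟨b, hb, hrep⟩ := rep_mk v hv0
      have hE : External F (Projectivization.mk F v hv0) := by
        unfold External
        rw [hrep, qc_smul, hv]
        exact ⟨⟨b, by ring⟩, by simpa using hb⟩
      have h1 := ha ⟨_, hE⟩
      generalize hα : a ⟨_, hE⟩ = α at h1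
      rw [hrep, smul_smul, qc_smul, hv, mul_one] at h1
      have h3 : (α * b) = 1 ∨ (α * b) = -1 := sq_eq_one_iff_of_dom.mp h1
      refine ⟨⟨⟨_, hE⟩, ⟨α * b, by simpa using h3⟩⟩, ?_⟩
      apply Subtype.ext
      simp only
      rw [hα, hrep, smul_smul, smul_smul]
      have : α * b * (α * b) = 1 := by linear_combination h1
      first
        | rw [this, one_smul]
        | (rw [← mul_assoc] at this; rw [this, one_smul])
        | (rw [← mul_assoc, this, one_smul])
        | (rw [mul_assoc, this, one_smul])
  have h11 : (1 : F) ≠ -1 := by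
    intro h; apply h2; linear_combination h
  rw [Nat.card_prod, Nat.card_coe_set_eq, Set.ncard_pair h11, mul_comm] at hcard
  exact hcard

end helpers

/-- For an external point `P` of `PG(2,q)`, the complement of `NE(P)` within the set
of external points has cardinality `2(q-1)+1 = 2q-1`; hence
`|NE(P)| ≡ q(q+1)/2 - 1 (mod 2)`. -/
theorem stmt14 (F : Type) [Field F] [Fintype F] (q : ℕ)
    (hq : Fintype.card F = q) (hodd : Odd q)
    (P : Projectivization F (Fin 3 → F)) (hP : External F P) :
    {R : Projectivization F (Fin 3 → F) | External F R ∧ R ∉ NE F P}.ncard = 2 * q - 1 ∧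
    (NE F P).ncard % 2 = (q * (q + 1) / 2 - 1) % 2 := by
  have h2 : (2 : F) ≠ 0 := by
    apply Ring.two_ne_zero
    intro h
    have := FiniteField.even_card_of_char_two h
    rw [hq] at this
    have := Nat.odd_iff.mp hodd
    omega
  have h1 : {R : Projectivization F (Fin 3 → F) | External F R ∧ R ∉ NE F P}.ncard = 2 * q - 1 := by
    rw [compl_eq h2 P hP, ncard_compl h2 P hP.2]
    obtain ⟨s, hs⟩ := hP.1
    rw [ncard_isotropic h2 _ s hs (by rintro rfl; exact hP.2 (by simpa using hs)), hq]
  refine ⟨h1, ?_⟩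
  have hE := ncard_external h2
  rw [hq] at hE
  have : Finite (Projectivization F (Fin 3 → F)) := inferInstance
  have hsub : NE F P ⊆ {R | External F R} := fun R hR => hR.1
  have h3 := Set.ncard_sdiff_add_ncard_of_subset hsub
  have h4 : {R | External F R} \ NE F P = {R | External F R ∧ R ∉ NE F P} := rfl
  rw [h4, h1] at h3
  have hq0 : 0 < q := hodd.pos
  have h5 : q * (q + 1) / 2 = {R : Projectivization F (Fin 3 → F) | External F R}.ncard := by
    omega
  rw [h5]
  omega
end

section
/- Let q be an odd prime power, and let P_i ≠ P_j be external points of the conic O = {x_1^2 = x_0 x_2} in PG(2,q). If the line through P_i and P_j is tangent to O, then the complement of N_E(P_i) ∩ N_E(P_j) within the set E of external points has cardinality 3(q−1); if the line through P_i and P_j is not tangent, this complement has cardinality 4(q−3)+6 = 4q−6. In both cases the complement has even cardinality, so |N_E(P_i) ∩ N_E(P_j)| ≡ |E| (mod 2). -/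
/-- evaluation of the binary quadratic form attached to `w` at a point of the projective line -/
def ev15 {F : Type} [Field F] (w : Fin 3 → F) : Option F → F
  | none => w 0
  | some t => w 0 * t ^ 2 - 2 * w 1 * t + w 2

/-- conic point with parameter `t` -/
def cp15 {F : Type} [Field F] : Option F → (Fin 3 → F)
  | none => ![0, 0, 1]
  | some t => ![1, t, t ^ 2]

/-- meeting point of the tangents at two parameters -/
def mp15 {F : Type} [Field F] : Option F → Option F → (Fin 3 → F)
  | some s, some t => ![2, s + t, 2 * s * t]
  | some s, none => ![0, 1, 2 * s]
  | none, some t => ![0, 1, 2 * t]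
  | none, none => ![0, 0, 1]

open Classical in
/-- roots -/
noncomputable def Z15 {F : Type} [Field F] [Fintype F] (w : Fin 3 → F) : Finset (Option F) :=
  Finset.univ.filter (fun t => ev15 w t = 0)

lemma mem_Z15 {F : Type} [Field F] [Fintype F] (w : Fin 3 → F) (t : Option F) :
    t ∈ Z15 w ↔ ev15 w t = 0 := by simp [Z15]

lemma ev15_smul {F : Type} [Field F] (k : F) (w : Fin 3 → F) (t : Option F) :
    ev15 (k • w) t = k * ev15 w t := by
  cases t <;> simp [ev15] <;> ring

lemma Qc_smul15 {F : Type} [Field F] (k : F) (w : Fin 3 → F) :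
    Qc F (k • w) = k ^ 2 * Qc F w := by
  simp [Qc]; ring

lemma Z15_smul {F : Type} [Field F] [Fintype F] {k : F} (hk : k ≠ 0) (w : Fin 3 → F) :
    Z15 (k • w) = Z15 w := by
  ext t; simp [mem_Z15, ev15_smul, hk]

lemma eq_smul_mp15 {F : Type} [Field F] (h2 : (2 : F) ≠ 0) (w : Fin 3 → F) (s t : Option F)
    (hst : s ≠ t) (hs : ev15 w s = 0) (ht : ev15 w t = 0) : ∃ k : F, w = k • mp15 s t := by
  rcases s with _ | s <;> rcases t with _ | t
  · exact absurd rfl hst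
  · simp only [ev15] at hs ht
    refine ⟨w 1, ?_⟩
    ext i; fin_cases i <;> simp [mp15, hs]
    rw [hs] at ht; linear_combination ht
  · simp only [ev15] at hs ht
    refine ⟨w 1, ?_⟩
    ext i; fin_cases i <;> simp [mp15, ht]
    rw [ht] at hs; linear_combination hs
  · simp only [ev15] at hs ht
    have hne : s - t ≠ 0 := fun h => hst (by rw [sub_eq_zero.1 h])
    have h1 : w 0 * (s + t) = 2 * w 1 := by
      apply mul_left_cancel₀ hne
      linear_combination hs - ht
    refine ⟨w 0 / 2, ?_⟩
    ext i; fin_cases i <;> simp [mp15]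
    · field_simp
    · field_simp; linear_combination -h1
    · field_simp; linear_combination hs - s * h1

lemma ev15_mp15 {F : Type} [Field F] (h2 : (2 : F) ≠ 0) (s t r : Option F) (hst : s ≠ t) :
    ev15 (mp15 s t) r = 0 ↔ r = s ∨ r = t := by
  rcases s with _ | s <;> rcases t with _ | t
  · exact absurd rfl hst
  · rcases r with _ | r <;> simp [ev15, mp15]
    rw [show -(2 * r) + 2 * t = 2 * (t - r) by ring]
    simp [h2, sub_eq_zero, eq_comm]
  · rcases r with _ | r <;> simp [ev15, mp15]
    rw [show -(2 * r) + 2 * s = 2 * (s - r) by ring]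
    simp [h2, sub_eq_zero, eq_comm]
  · rcases r with _ | r <;> simp [ev15, mp15, h2]
    rw [show 2 * r ^ 2 - 2 * (s + t) * r + 2 * s * t = 2 * ((r - s) * (r - t)) by ring]
    simp [h2, sub_eq_zero]

lemma mp15_Q {F : Type} [Field F] (s t : Option F) (hst : s ≠ t) :
    IsSquare (Qc F (mp15 s t)) ∧ Qc F (mp15 s t) ≠ 0 := by
  rcases s with _ | s <;> rcases t with _ | t
  · exact absurd rfl hst
  · simp [Qc, mp15]
  · simp [Qc, mp15]
  · have hne : s - t ≠ 0 := fun h => hst (by rw [sub_eq_zero.1 h])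
    have : Qc F (mp15 (some s) (some t)) = (s - t) * (s - t) := by simp [Qc, mp15]; ring
    rw [this]
    exact ⟨⟨_, rfl⟩, mul_ne_zero hne hne⟩

lemma Z15_mp15 {F : Type} [Field F] [Fintype F] [DecidableEq (Option F)] (h2 : (2 : F) ≠ 0)
    (s t : Option F) (hst : s ≠ t) : Z15 (mp15 s t) = {s, t} := by
  ext r; simp [mem_Z15, ev15_mp15 h2 s t r hst]

lemma Z15_le {F : Type} [Field F] [Fintype F] (h2 : (2 : F) ≠ 0) (w : Fin 3 → F) (hw : w ≠ 0) :
    (Z15 w).card ≤ 2 := by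
  by_contra h
  push Not at h
  obtain ⟨a, b, c, ha, hb, hc, hab, hac, hbc⟩ := Finset.two_lt_card_iff.1 h
  rw [mem_Z15] at ha hb hc
  obtain ⟨k, rfl⟩ := eq_smul_mp15 h2 w a b hab ha hb
  have hk : k ≠ 0 := by rintro rfl; simp at hw
  rw [ev15_smul, mul_eq_zero, or_iff_right hk, ev15_mp15 h2 a b c hab] at hc
  rcases hc with rfl | rfl
  · exact hac rfl
  · exact hbc rfl

lemma Z15_ext {F : Type} [Field F] [Fintype F] (h2 : (2 : F) ≠ 0) (w : Fin 3 → F)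
    (hs : IsSquare (Qc F w)) (h0 : Qc F w ≠ 0) : (Z15 w).card = 2 := by
  classical
  have hw : w ≠ 0 := by rintro rfl; simp [Qc] at h0
  refine le_antisymm (Z15_le h2 w hw) ?_
  obtain ⟨r, hr⟩ := hs
  have hr0 : r ≠ 0 := by rintro rfl; simp at hr; exact h0 hr
  have key : ∃ a b : Option F, a ≠ b ∧ ev15 w a = 0 ∧ ev15 w b = 0 := by
    by_cases hw0 : w 0 = 0
    · have hw1 : w 1 ≠ 0 := by
        intro h; simp [Qc, hw0, h] at h0
      refine ⟨none, some (w 2 / (2 * w 1)), by simp, hw0, ?_⟩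
      simp only [ev15, hw0]; field_simp; ring
    · simp only [Qc] at hr
      refine ⟨some ((w 1 + r) / w 0), some ((w 1 - r) / w 0), ?_, ?_, ?_⟩
      · intro h
        have h := Option.some.inj h
        field_simp at h
        have : 2 * r = 0 := by linear_combination h
        simp [h2, hr0] at this
      · simp only [ev15]; field_simp; linear_combination -hr
      · simp only [ev15]; field_simp; linear_combination -hr
  obtain ⟨a, b, hab, ha, hb⟩ := key
  exact Finset.one_lt_card.2 ⟨a, (mem_Z15 _ _).2 ha, b, (mem_Z15 _ _).2 hb, hab⟩

lemma Z15_one {F : Type} [Field F] [Fintype F] (h2 : (2 : F) ≠ 0) (w : Fin 3 → F)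
    (h : (Z15 w).card = 1) : ∃ (t : Option F) (k : F), w = k • cp15 t := by
  obtain ⟨t, ht⟩ := Finset.card_eq_one.1 h
  have hm : ∀ r, ev15 w r = 0 ↔ r = t := by
    intro r; rw [← mem_Z15, ht, Finset.mem_singleton]
  have h0 := (hm t).2 rfl
  rcases t with _ | t
  · simp only [ev15] at h0
    have h1 : w 1 = 0 := by
      by_contra h1
      have := (hm (some (w 2 / (2 * w 1)))).1 (by simp only [ev15, h0]; field_simp; ring)
      simp at this
    refine ⟨none, w 2, ?_⟩
    ext i; fin_cases i <;> simp [cp15, h0, h1]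
  · have hw0 : w 0 ≠ 0 := by
      intro hw
      have := (hm none).1 hw
      simp at this
    simp only [ev15] at h0
    have := (hm (some (2 * w 1 / w 0 - t))).1 (by
      simp only [ev15]; field_simp; linear_combination w 0 * h0)
    have := Option.some.inj this
    field_simp at this
    have h1 : w 1 = w 0 * t := by
      apply mul_left_cancel₀ h2; linear_combination this
    refine ⟨some t, w 0, ?_⟩
    ext i; fin_cases i <;> simp [cp15]
    · exact h1
    · linear_combination h0 + 2 * t * h1

lemma Z15_cp15 {F : Type} [Field F] [Fintype F] (h2 : (2 : F) ≠ 0) (t : Option F) :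
    Z15 (cp15 t) = {t} := by
  ext r
  rw [mem_Z15, Finset.mem_singleton]
  rcases t with _ | t <;> rcases r with _ | r <;> simp [ev15, cp15]
  rw [show r ^ 2 - 2 * t * r + t ^ 2 = (r - t) ^ 2 by ring]
  simp [sub_eq_zero]

lemma cp15_ne {F : Type} [Field F] (t : Option F) : cp15 t ≠ 0 := by
  rcases t with _ | t
  · intro h; have := congrFun h 2; simp [cp15] at this
  · intro h; have := congrFun h 0; simp [cp15] at this

lemma mp15_ne {F : Type} [Field F] (s t : Option F) (hst : s ≠ t) : mp15 s t ≠ 0 := by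
  intro h
  have := (mp15_Q s t hst).2
  rw [h] at this; simp [Qc] at this

/-- polar functional -/
def pf15 {F : Type} [Field F] (w : Fin 3 → F) : (Fin 3 → F) →ₗ[F] F where
  toFun x := w 0 * x 2 - 2 * w 1 * x 1 + w 2 * x 0
  map_add' x y := by simp; ring
  map_smul' k x := by simp; ring

lemma pf15_cp {F : Type} [Field F] (w : Fin 3 → F) (t : Option F) :
    pf15 w (cp15 t) = ev15 w t := by
  cases t <;> simp [pf15, cp15, ev15]

lemma pf15_comm {F : Type} [Field F] (w x : Fin 3 → F) : pf15 w x = pf15 x w := by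
  simp [pf15]; ring

lemma pf15_surj {F : Type} [Field F] (h2 : (2 : F) ≠ 0) (f : (Fin 3 → F) →ₗ[F] F) :
    ∃ w, f = pf15 w := by
  refine ⟨![f (Pi.single 2 1), - f (Pi.single 1 1) / 2, f (Pi.single 0 1)], ?_⟩
  apply LinearMap.pi_ext'
  intro i
  ext
  fin_cases i <;> simp [pf15]
  field_simp

lemma pf15_finrank {F : Type} [Field F] (f : (Fin 3 → F) →ₗ[F] F) (hf : f ≠ 0) :
    Module.finrank F (LinearMap.ker f) = 2 := by
  have h := LinearMap.finrank_range_add_finrank_ker f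
  have hr : LinearMap.range f = ⊤ := LinearMap.range_eq_top.2 (LinearMap.surjective hf)
  rw [hr] at h
  simp at h
  omega

lemma pf15_ne {F : Type} [Field F] (h2 : (2 : F) ≠ 0) (w : Fin 3 → F) (hw : w ≠ 0) :
    pf15 w ≠ 0 := by
  intro h
  apply hw
  ext i
  fin_cases i
  · have := LinearMap.congr_fun h ![0, 0, 1]; simpa [pf15] using this
  · have := LinearMap.congr_fun h ![0, 1, 0]; simpa [pf15, h2] using this
  · have := LinearMap.congr_fun h ![1, 0, 0]; simpa [pf15] using this

lemma line15 {F : Type} [Field F] (h2 : (2 : F) ≠ 0) (L : Submodule F (Fin 3 → F))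
    (hL : IsLine F L) : ∃ w, w ≠ 0 ∧ L = LinearMap.ker (pf15 w) := by
  unfold IsLine at hL
  have hlt : L < ⊤ := by
    rw [lt_top_iff_ne_top]; rintro rfl; simp at hL
  obtain ⟨f, hf, hle⟩ := Submodule.exists_le_ker_of_lt_top L hlt
  obtain ⟨w, rfl⟩ := pf15_surj h2 f
  refine ⟨w, ?_, Submodule.eq_of_le_of_finrank_eq hle (by rw [hL, pf15_finrank _ hf])⟩
  rintro rfl
  apply hf
  ext; simp [pf15]

lemma sub_le15 {F : Type} [Field F] (P : Projectivization F (Fin 3 → F))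
    (L : Submodule F (Fin 3 → F)) : P.submodule ≤ L ↔ P.rep ∈ L := by
  rw [Projectivization.submodule_eq, Submodule.span_singleton_le_iff_mem]

lemma rep_mk15 {F : Type} [Field F] (v : Fin 3 → F) (hv : v ≠ 0) :
    ∃ k : F, k ≠ 0 ∧ (Projectivization.mk F v hv).rep = k • v := by
  obtain ⟨a, ha⟩ := Projectivization.exists_smul_eq_mk_rep F v hv
  exact ⟨a, a.ne_zero, ha.symm⟩

lemma eq_of_smul15 {F : Type} [Field F] (P R : Projectivization F (Fin 3 → F)) (v : Fin 3 → F)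
    (a b : F) (ha : P.rep = a • v) (hb : R.rep = b • v) : P = R := by
  have ha0 : a ≠ 0 := by rintro rfl; exact P.rep_nonzero (by simp [ha])
  have hb0 : b ≠ 0 := by rintro rfl; exact R.rep_nonzero (by simp [hb])
  rw [← P.mk_rep, ← R.mk_rep, Projectivization.mk_eq_mk_iff']
  refine ⟨a / b, ?_⟩
  rw [ha, hb, smul_smul, div_mul_cancel₀ _ hb0]

lemma nAbs15 {F : Type} [Field F] [Fintype F] (w : Fin 3 → F) (h2 : (2 : F) ≠ 0) :
    nAbs F (LinearMap.ker (pf15 w)) = (Z15 w).card := by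
  unfold nAbs
  rw [← Nat.card_eq_finsetCard (Z15 w)]
  symm
  have hmem : ∀ t : Z15 w, Absolute F (Projectivization.mk F (cp15 t.1) (cp15_ne t.1)) ∧
      (Projectivization.mk F (cp15 t.1) (cp15_ne t.1)).submodule ≤ LinearMap.ker (pf15 w) := by
    rintro ⟨t, ht⟩
    rw [mem_Z15] at ht
    constructor
    · obtain ⟨k, hk, he⟩ := rep_mk15 (cp15 t) (cp15_ne t)
      unfold Absolute
      rw [he, Qc_smul15]
      cases t <;> simp [Qc, cp15]
    · rw [Projectivization.submodule_mk, Submodule.span_singleton_le_iff_mem, LinearMap.mem_ker,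
        pf15_cp, ht]
  refine Nat.card_congr (Equiv.ofBijective (fun t => ⟨_, hmem t⟩) ⟨?_, ?_⟩)
  · rintro ⟨s, hs⟩ ⟨t, ht⟩ h
    simp only [Subtype.mk.injEq] at h ⊢
    rw [Projectivization.mk_eq_mk_iff'] at h
    obtain ⟨a, ha⟩ := h
    have ha0 : a ≠ 0 := by rintro rfl; exact cp15_ne s (by simp [← ha])
    have h1 := Z15_cp15 h2 s
    rw [← ha, Z15_smul ha0, Z15_cp15 h2] at h1
    exact (Finset.singleton_injective h1).symm
  · rintro ⟨P, hP, hPL⟩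
    rw [sub_le15, LinearMap.mem_ker] at hPL
    unfold Absolute at hP
    have key : ∃ (t : Option F) (k : F), P.rep = k • cp15 t := by
      simp only [Qc] at hP
      by_cases h0 : P.rep 0 = 0
      · refine ⟨none, P.rep 2, ?_⟩
        have h1 : P.rep 1 = 0 := by simpa [h0] using hP
        ext i; fin_cases i <;> simp [cp15, h0, h1]
      · refine ⟨some (P.rep 1 / P.rep 0), P.rep 0, ?_⟩
        ext i; fin_cases i <;> simp [cp15]
        · field_simp
        · field_simp; linear_combination -hP
    obtain ⟨t, k, hk⟩ := key
    have hk0 : k ≠ 0 := by rintro rfl; exact P.rep_nonzero (by simp [hk])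
    refine ⟨⟨t, ?_⟩, ?_⟩
    · rw [mem_Z15, ← pf15_cp]
      rw [hk, map_smul, smul_eq_mul, mul_eq_zero, or_iff_right hk0] at hPL
      exact hPL
    · simp only [Subtype.mk.injEq]
      obtain ⟨a, ha, he⟩ := rep_mk15 (cp15 t) (cp15_ne t)
      exact eq_of_smul15 _ _ _ _ _ he hk

lemma span15 {F : Type} [Field F] (P R : Projectivization F (Fin 3 → F)) (hPR : P ≠ R) :
    IsLine F (P.submodule ⊔ R.submodule) := by
  unfold IsLine
  rw [Projectivization.submodule_eq, Projectivization.submodule_eq, ← Submodule.span_union]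
  have h := finrank_span_eq_card (Projectivization.linearIndependent_pair_iff_ne.2 hPR)
  rw [Matrix.range_cons, Matrix.range_cons, Matrix.range_empty, Set.union_empty] at h
  simpa using h

lemma tangent15 {F : Type} [Field F] [Fintype F] (h2 : (2 : F) ≠ 0)
    (P R : Projectivization F (Fin 3 → F)) (hPR : P ≠ R) (L : Submodule F (Fin 3 → F))
    (hL : IsLine F L) (hP : P.submodule ≤ L) (hR : R.submodule ≤ L) :
    nAbs F L = 1 ↔ ∃ t, t ∈ Z15 P.rep ∧ t ∈ Z15 R.rep := by
  constructor
  · intro h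
    obtain ⟨w, hw, rfl⟩ := line15 h2 L hL
    rw [nAbs15 w h2] at h
    obtain ⟨t, k, rfl⟩ := Z15_one h2 w h
    have hk0 : k ≠ 0 := by rintro rfl; simp at hw
    rw [sub_le15, LinearMap.mem_ker, pf15_comm, map_smul, smul_eq_mul, mul_eq_zero,
      or_iff_right hk0, pf15_cp] at hP hR
    exact ⟨t, (mem_Z15 _ _).2 hP, (mem_Z15 _ _).2 hR⟩
  · rintro ⟨t, h1, h3⟩
    rw [mem_Z15, ← pf15_cp, pf15_comm, ← LinearMap.mem_ker, ← sub_le15] at h1 h3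
    have hk := pf15_finrank _ (pf15_ne h2 _ (cp15_ne t))
    have hs := span15 P R hPR
    unfold IsLine at hL hs
    have e1 := Submodule.eq_of_le_of_finrank_eq (sup_le hP hR) (hs.trans hL.symm)
    have e2 := Submodule.eq_of_le_of_finrank_eq (sup_le h1 h3) (hs.trans hk.symm)
    rw [← e1, e2, nAbs15 _ h2, Z15_cp15 h2]
    simp

lemma NE15 {F : Type} [Field F] [Fintype F] (h2 : (2 : F) ≠ 0)
    (P R : Projectivization F (Fin 3 → F)) (hP : External F P) (hR : External F R) :
    R ∈ NE F P ↔ Disjoint (Z15 R.rep) (Z15 P.rep) := by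
  rw [Finset.disjoint_left]
  constructor
  · rintro ⟨-, hne, L, hL, hPL, hRL, h⟩ t h1 h3
    have := (tangent15 h2 P R hne.symm L hL hPL hRL).2 ⟨t, h3, h1⟩
    omega
  · intro h
    have hne : P ≠ R := by
      rintro rfl
      have hc := Z15_ext h2 _ hP.1 hP.2
      obtain ⟨t, ht⟩ := Finset.card_pos.1 (by omega : 0 < (Z15 P.rep).card)
      exact h ht ht
    refine ⟨hR, hne.symm, _, span15 P R hne, le_sup_left, le_sup_right, ?_⟩
    have h1 : nAbs F (P.submodule ⊔ R.submodule) ≠ 1 := by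
      rw [Ne, tangent15 h2 P R hne _ (span15 P R hne) le_sup_left le_sup_right]
      rintro ⟨t, ht, ht'⟩
      exact h ht' ht
    obtain ⟨w, hw, he⟩ := line15 h2 _ (span15 P R hne)
    have h3 := Z15_le h2 w hw
    rw [← nAbs15 w h2, ← he] at h3
    omega

lemma inj15 {F : Type} [Field F] [Fintype F] (h2 : (2 : F) ≠ 0)
    (P R : Projectivization F (Fin 3 → F)) (hP : External F P)
    (h : Z15 P.rep = Z15 R.rep) : P = R := by
  obtain ⟨a, ha, b, hb, hab⟩ := Finset.one_lt_card.1
    (by rw [Z15_ext h2 _ hP.1 hP.2]; norm_num : 1 < (Z15 P.rep).card)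
  obtain ⟨k, hk⟩ := eq_smul_mp15 h2 _ a b hab ((mem_Z15 _ _).1 ha) ((mem_Z15 _ _).1 hb)
  rw [h] at ha hb
  obtain ⟨l, hl⟩ := eq_smul_mp15 h2 _ a b hab ((mem_Z15 _ _).1 ha) ((mem_Z15 _ _).1 hb)
  exact eq_of_smul15 _ _ _ _ _ hk hl

lemma surj15 {F : Type} [Field F] [Fintype F] (h2 : (2 : F) ≠ 0) (S : Finset (Option F))
    (hS : S.card = 2) : ∃ P, External F P ∧ Z15 P.rep = S := by
  classical
  obtain ⟨s, t, hst, rfl⟩ := Finset.card_eq_two.1 hS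
  refine ⟨Projectivization.mk F (mp15 s t) (mp15_ne s t hst), ?_⟩
  obtain ⟨k, hk, he⟩ := rep_mk15 (mp15 s t) (mp15_ne s t hst)
  unfold External
  rw [he, Z15_smul hk, Z15_mp15 h2 s t hst, Qc_smul15]
  obtain ⟨h1, h3⟩ := mp15_Q s t hst
  exact ⟨⟨(IsSquare.sq k).mul h1, mul_ne_zero (pow_ne_zero 2 hk) h3⟩, rfl⟩

/-- external points whose pair lies in `T` -/
lemma count15 {F : Type} [Field F] [Fintype F] (h2 : (2 : F) ≠ 0) (T : Finset (Option F)) :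
    {R : Projectivization F (Fin 3 → F) | External F R ∧ Z15 R.rep ⊆ T}.ncard
      = T.card.choose 2 := by
  rw [← Finset.card_powersetCard, ← Set.ncard_coe_finset]
  refine Set.ncard_congr (fun R _ => Z15 R.rep) ?_ ?_ ?_
  · rintro R ⟨hR, hT⟩
    simp [Finset.mem_powersetCard, hT, Z15_ext h2 _ hR.1 hR.2]
  · rintro P R hP hR h
    exact inj15 h2 P R hP.1 h
  · intro S hS
    simp only [Finset.mem_coe, Finset.mem_powersetCard] at hS
    obtain ⟨P, hP, hZ⟩ := surj15 h2 S hS.2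
    exact ⟨P, ⟨hP, by rw [hZ]; exact hS.1⟩, hZ⟩

/-- For distinct external points `Pᵢ ≠ Pⱼ` of `PG(2,q)`, the complement of
`NE(Pᵢ) ∩ NE(Pⱼ)` within the set `E` of external points has cardinality `3(q-1)` if
the line through `Pᵢ` and `Pⱼ` is tangent to the conic, and `4(q-3)+6 = 4q-6`
otherwise; in both cases `|NE(Pᵢ) ∩ NE(Pⱼ)| ≡ |E| (mod 2)`. -/
theorem stmt15 (F : Type) [Field F] [Fintype F] (q : ℕ)
    (hq : Fintype.card F = q) (hodd : Odd q)
    (Pi Pj : Projectivization F (Fin 3 → F)) (hPi : External F Pi) (hPj : External F Pj)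
    (hij : Pi ≠ Pj)
    (L : Submodule F (Fin 3 → F)) (hL : IsLine F L)
    (hiL : Pi.submodule ≤ L) (hjL : Pj.submodule ≤ L) :
    (nAbs F L = 1 →
      {R : Projectivization F (Fin 3 → F) |
        External F R ∧ R ∉ NE F Pi ∩ NE F Pj}.ncard = 3 * (q - 1)) ∧
    (nAbs F L ≠ 1 →
      {R : Projectivization F (Fin 3 → F) |
        External F R ∧ R ∉ NE F Pi ∩ NE F Pj}.ncard = 4 * q - 6) ∧
    (NE F Pi ∩ NE F Pj).ncard % 2 =
      {R : Projectivization F (Fin 3 → F) | External F R}.ncard % 2 := by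
  classical
  have h2 : (2 : F) ≠ 0 := by
    apply Ring.two_ne_zero
    intro hc
    have := FiniteField.even_card_of_char_two hc
    rw [hq] at this
    obtain ⟨m, hm⟩ := hodd
    omega
  set A := Z15 Pi.rep with hA
  set B := Z15 Pj.rep with hB
  have cA : A.card = 2 := Z15_ext h2 _ hPi.1 hPi.2
  have cB : B.card = 2 := Z15_ext h2 _ hPj.1 hPj.2
  have hAB : A ≠ B := fun h => hij (inj15 h2 Pi Pj hPi h)
  have cX : Fintype.card (Option F) = q + 1 := by rw [Fintype.card_option, hq]
  have hNE : NE F Pi ∩ NE F Pj =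
      {R : Projectivization F (Fin 3 → F) | External F R ∧ Z15 R.rep ⊆ (A ∪ B)ᶜ} := by
    ext R
    constructor
    · rintro ⟨h1, h3⟩
      have hR := h1.1
      rw [NE15 h2 _ _ hPi hR] at h1
      rw [NE15 h2 _ _ hPj hR] at h3
      refine ⟨hR, ?_⟩
      rw [Finset.subset_compl_iff_disjoint_right, Finset.disjoint_union_right]
      exact ⟨h1, h3⟩
    · rintro ⟨hR, h⟩
      rw [Finset.subset_compl_iff_disjoint_right, Finset.disjoint_union_right] at h
      exact ⟨(NE15 h2 _ _ hPi hR).2 h.1, (NE15 h2 _ _ hPj hR).2 h.2⟩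
  have nNE : (NE F Pi ∩ NE F Pj).ncard = (q + 1 - (A ∪ B).card).choose 2 := by
    rw [hNE, count15 h2, Finset.card_compl, cX]
  have nE : {R : Projectivization F (Fin 3 → F) | External F R}.ncard = (q + 1).choose 2 := by
    have := count15 h2 (Finset.univ : Finset (Option F))
    simpa [cX, hq] using this
  have hfin : {R : Projectivization F (Fin 3 → F) | External F R}.Finite := by
    apply Set.finite_of_ncard_pos
    rw [nE]
    apply Nat.choose_pos
    have := Fintype.card_pos (α := F)
    omega
  have hsub : NE F Pi ∩ NE F Pj ⊆ {R | External F R} := fun R hR => hR.1.1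
  have nC : {R : Projectivization F (Fin 3 → F) |
        External F R ∧ R ∉ NE F Pi ∩ NE F Pj}.ncard + (NE F Pi ∩ NE F Pj).ncard
        = (q + 1).choose 2 := by
    rw [← nE]
    exact Set.ncard_sdiff_add_ncard_of_subset hsub hfin
  have hle : (A ∪ B).card ≤ q + 1 := by rw [← cX]; exact Finset.card_le_univ _
  have hui := Finset.card_union_add_card_inter A B
  have hi : (A ∩ B).card < 2 := by
    by_contra h
    push Not at h
    have e1 := Finset.eq_of_subset_of_card_le (Finset.inter_subset_left (s₁ := A) (s₂ := B))
      (by omega)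
    have e2 := Finset.eq_of_subset_of_card_le (Finset.inter_subset_right (s₁ := A) (s₂ := B))
      (by omega)
    exact hAB (e1.symm.trans e2)
  have ht : nAbs F L = 1 ↔ (A ∩ B).card ≠ 0 := by
    rw [tangent15 h2 Pi Pj hij L hL hiL hjL, Finset.card_ne_zero]
    simp [Finset.Nonempty, hA, hB]
  have ch1 : (q + 1).choose 2 * 2 = (q + 1) * q := by
    have := Nat.add_one_mul_choose_eq q 1
    simp at this; omega
  rw [nNE] at nC ⊢
  rw [nE]
  by_cases hc : (A ∩ B).card = 0
  · have hu : (A ∪ B).card = 4 := by omega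
    rw [hu] at nC ⊢
    have e : (q + 1).choose 2 = (4 * q - 6) + (q + 1 - 4).choose 2 := by
      obtain ⟨m, rfl⟩ : ∃ m, q = m + 3 := ⟨q - 3, by omega⟩
      have ch2 : m.choose 2 * 2 + m = m * m := by
        rcases m with _ | m
        · simp
        · have := Nat.add_one_mul_choose_eq m 1
          simp at this; nlinarith
      simp only [show m + 3 + 1 - 4 = m by omega, show 4 * (m + 3) - 6 = 4 * m + 6 by omega]
      nlinarith
    refine ⟨fun h => absurd hc (ht.1 h), fun _ => by omega, by omega⟩
  · have hu : (A ∪ B).card = 3 := by omega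
    rw [hu] at nC ⊢
    have e : (q + 1).choose 2 = 3 * (q - 1) + (q + 1 - 3).choose 2 := by
      obtain ⟨m, rfl⟩ : ∃ m, q = m + 2 := ⟨q - 2, by omega⟩
      have ch2 : m.choose 2 * 2 + m = m * m := by
        rcases m with _ | m
        · simp
        · have := Nat.add_one_mul_choose_eq m 1
          simp at this; nlinarith
      simp only [show m + 2 + 1 - 3 = m by omega, show m + 2 - 1 = m + 1 by omega]
      nlinarith
    obtain ⟨m, hm⟩ := hodd
    refine ⟨fun _ => by omega, fun h => absurd (ht.2 hc) h, by omega⟩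
end
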